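/- arXiv:2507.10285 — 8 statements merged into one kernel-verified Lean document; each statement's English description precedes it below -/
import Mathlib

section
/- Let $N, n \ge 1$, let $H, K$ be complex $N \times N$ matrices, let $F$ be a complex $n \times n$ matrix, let $r \in \mathbb{C}^n$ be a vector and $l \in \mathbb{C}^n$ a covector such that the moment conditions $l^{\top} F^k r = 1$ hold for every integer $k \ge 0$. Set $A = -iH + K$ and let $\widetilde{A} = -i (I_n \otimes H) + F \otimes K$ (Kronecker products, with $I_n$ the $n \times n$ identity). Then for every $t \in \mathbb{R}$ and all indices $a, b \in \{1,\dots,N\}$, $\sum_{i=1}^{n} \sum_{j=1}^{n} l_i \, [\exp(t \widetilde{A})]_{(i,a),(j,b)} \, r_j = [\exp(t A)]_{a,b}$; that is, contracting the dilated matrix exponential with $l$ on the left and $r$ on the right in the ancilla factor reproduces the non-unitary propagator $e^{tA}$ exactly. -/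
open Matrix
open scoped Kronecker

/-!
On the matrices `(F ^ k) ⊗ₖ M`, contracting the ancilla factor with `l` and `r` amounts, by the
moment conditions, to replacing `F` by the scalar `1`. As left multiplication by `1 ⊗ₖ B + F ⊗ₖ K`
maps the span of these matrices to itself, the powers of this generator contract to those of
`B + K`. The contraction is not multiplicative, but being additive and continuous it can be applied
term by term to the exponential series.
-/

open scoped Nat in
theorem map_exp_of_map_pow {𝔸 𝔹 G : Type*} [NormedRing 𝔸] [NormedAlgebra ℚ 𝔸] [CompleteSpace 𝔸]
    [Ring 𝔹] [Algebra ℚ 𝔹] [TopologicalSpace 𝔹] [IsTopologicalRing 𝔹] [T2Space 𝔹]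
    [FunLike G 𝔸 𝔹] [AddMonoidHomClass G 𝔸 𝔹] {f : G} (hf : Continuous f) {x : 𝔸} {y : 𝔹}
    (hpow : ∀ k : ℕ, f (x ^ k) = y ^ k) :
    f (NormedSpace.exp x) = NormedSpace.exp y := by
  have hsum : HasSum (fun k : ℕ => f ((k !⁻¹ : ℚ) • x ^ k)) (f (NormedSpace.exp x)) :=
    (NormedSpace.exp_series_hasSum_exp' x).map f hf
  simp only [map_inv_natCast_smul f ℚ ℚ, hpow] at hsum
  rw [← hsum.tsum_eq, NormedSpace.exp_eq_tsum_rat]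

section Contraction

variable {R m n : Type*} [Fintype n]

section Algebra

variable [CommSemiring R]

/-- Contraction of the ancilla factor of a matrix on `n × m` with the covector `l` and the vector
`r`, that is `X ↦ (lᵀ ⊗ 1) X (r ⊗ 1)`, where `n` indexes the ancilla and `m` the system. -/
def ancillaContraction (l r : n → R) : Matrix (n × m) (n × m) R →ₗ[R] Matrix m m R where
  toFun X := of fun a b => ∑ i, ∑ j, l i * X (i, a) (j, b) * r j
  map_add' X Y := by
    ext a b
    simp only [of_apply, Matrix.add_apply, mul_add, add_mul, Finset.sum_add_distrib]
  map_smul' c X := by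
    ext a b
    simp only [of_apply, Matrix.smul_apply, smul_eq_mul, RingHom.id_apply, Finset.mul_sum,
      mul_assoc, mul_left_comm c]

theorem ancillaContraction_apply (l r : n → R) (X : Matrix (n × m) (n × m) R) (a b : m) :
    ancillaContraction l r X a b = ∑ i, ∑ j, l i * X (i, a) (j, b) * r j :=
  rfl

theorem continuous_ancillaContraction [TopologicalSpace R] [IsTopologicalSemiring R]
    (l r : n → R) :
    Continuous (ancillaContraction (m := m) l r) := by
  refine continuous_matrix fun a b => ?_
  simp only [ancillaContraction_apply]
  fun_prop

theorem ancillaContraction_kronecker (l r : n → R) (G : Matrix n n R) (M : Matrix m m R) :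
    ancillaContraction l r (G ⊗ₖ M) = (l ⬝ᵥ G *ᵥ r) • M := by
  ext a b
  simp only [ancillaContraction_apply, kronecker_apply, Matrix.smul_apply, smul_eq_mul, dotProduct,
    mulVec, Finset.mul_sum, Finset.sum_mul]
  refine Finset.sum_congr rfl fun i _ => Finset.sum_congr rfl fun j _ => ?_
  ring

variable [Fintype m] [DecidableEq n]

theorem one_kronecker_add_kronecker_mul_pow_kronecker (F : Matrix n n R) (B K M : Matrix m m R)
    (k : ℕ) :
    (1 ⊗ₖ B + F ⊗ₖ K) * ((F ^ k) ⊗ₖ M) = (F ^ k) ⊗ₖ (B * M) + (F ^ (k + 1)) ⊗ₖ (K * M) := by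
  rw [add_mul, ← mul_kronecker_mul, ← mul_kronecker_mul, one_mul, pow_succ']

variable [DecidableEq m]

/- The right factor `(F ^ k) ⊗ₖ M` makes the induction on `p` go through: each application of the
dilated generator either keeps `k` or raises it by one. -/
theorem ancillaContraction_pow_mul_pow_kronecker {l r : n → R} {F : Matrix n n R}
    (hmom : ∀ k : ℕ, l ⬝ᵥ (F ^ k) *ᵥ r = 1) (B K M : Matrix m m R) (p k : ℕ) :
    ancillaContraction l r ((1 ⊗ₖ B + F ⊗ₖ K) ^ p * ((F ^ k) ⊗ₖ M)) = (B + K) ^ p * M := by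
  induction p generalizing k M with
  | zero => rw [pow_zero, pow_zero, one_mul, one_mul, ancillaContraction_kronecker, hmom, one_smul]
  | succ p ih =>
    rw [pow_succ, mul_assoc, one_kronecker_add_kronecker_mul_pow_kronecker, mul_add, map_add, ih,
      ih, ← mul_add, ← add_mul, ← mul_assoc, ← pow_succ]

theorem ancillaContraction_pow {l r : n → R} {F : Matrix n n R}
    (hmom : ∀ k : ℕ, l ⬝ᵥ (F ^ k) *ᵥ r = 1) (B K : Matrix m m R) (p : ℕ) :
    ancillaContraction l r ((1 ⊗ₖ B + F ⊗ₖ K) ^ p) = (B + K) ^ p := by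
  simpa only [pow_zero, one_kronecker_one, mul_one] using
    ancillaContraction_pow_mul_pow_kronecker hmom B K 1 p 0

end Algebra

theorem moment_fulfilling_exact_dilation_autonomous_general [Fintype m] [DecidableEq m]
    [DecidableEq n] [NormedCommRing R] [NormedAlgebra ℚ R] [CompleteSpace R] {l r : n → R}
    {F : Matrix n n R} (hmom : ∀ k : ℕ, l ⬝ᵥ (F ^ k) *ᵥ r = 1) (B K : Matrix m m R) :
    ancillaContraction l r (NormedSpace.exp (1 ⊗ₖ B + F ⊗ₖ K)) = NormedSpace.exp (B + K) :=
  open scoped Matrix.Norms.Operator in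
  -- The norm's uniformity unfolds to the product one, but not at instance transparency.
  have : @CompleteSpace (Matrix (n × m) (n × m) R) PseudoMetricSpace.toUniformSpace :=
    inferInstanceAs (CompleteSpace (n × m → n × m → R))
  map_exp_of_map_pow (continuous_ancillaContraction l r) (ancillaContraction_pow hmom B K)

end Contraction

/-- **Moment-fulfilling exact dilation, autonomous case.**
If `l^T F^k r = 1` for all `k ≥ 0`, then contracting the exponential of the dilated
generator `Ã = -i (Iₙ ⊗ H) + F ⊗ K` with `l` and `r` in the ancilla factor reproduces
the non-unitary propagator `e^{tA}` with `A = -iH + K`. -/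
theorem moment_fulfilling_exact_dilation_autonomous
    (N n : ℕ) (hN : 1 ≤ N) (hn : 1 ≤ n)
    (H K : Matrix (Fin N) (Fin N) ℂ) (F : Matrix (Fin n) (Fin n) ℂ)
    (r l : Fin n → ℂ)
    (hmom : ∀ k : ℕ, l ⬝ᵥ (F ^ k).mulVec r = 1)
    (A : Matrix (Fin N) (Fin N) ℂ) (hA : A = (-Complex.I) • H + K)
    (Atil : Matrix (Fin n × Fin N) (Fin n × Fin N) ℂ)
    (hAtil : Atil = (-Complex.I) • ((1 : Matrix (Fin n) (Fin n) ℂ) ⊗ₖ H) + F ⊗ₖ K) :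
    ∀ (t : ℝ) (a b : Fin N),
      ∑ i : Fin n, ∑ j : Fin n,
          l i * (NormedSpace.exp ((t : ℂ) • Atil)) (i, a) (j, b) * r j
        = (NormedSpace.exp ((t : ℂ) • A)) a b := by
  intro t a b
  rw [hA, hAtil, smul_add, smul_add, ← kronecker_smul, ← kronecker_smul, ← kronecker_smul,
    ← ancillaContraction_apply, moment_fulfilling_exact_dilation_autonomous_general hmom]
end

section
/- Let $N, n \ge 1$, let $H, K : \mathbb{R} \to \mathbb{C}^{N \times N}$ be continuous matrix-valued functions, let $F$ be a complex $n \times n$ matrix, and let $r \in \mathbb{C}^n$, $l \in \mathbb{C}^n$ satisfy the moment conditions $l^{\top} F^k r = 1$ for every integer $k \ge 0$. Suppose $X : \mathbb{R} \to \mathbb{C}^{N \times N}$ solves $X'(t) = (-iH(t) + K(t)) X(t)$ with $X(0) = I_N$, and $\Psi : \mathbb{R} \to \mathbb{C}^{nN \times nN}$ solves $\Psi'(t) = \big(-i (I_n \otimes H(t)) + F \otimes K(t)\big) \Psi(t)$ with $\Psi(0) = I_{nN}$ (derivatives in the sense of Fréchet derivatives of matrix-valued functions). Then for every $t \ge 0$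 and all $a, b \in \{1,\dots,N\}$, $\sum_{i=1}^{n} \sum_{j=1}^{n} l_i \, \Psi(t)_{(i,a),(j,b)} \, r_j = X(t)_{a,b}$. -/
open Matrix
open scoped Kronecker

/-!
The moments `l ᵥ* F ^ k ⬝ᵥ r` of the ancilla are read off by the observability matrix `O`, whose
rows are `l ᵥ* F ^ k` for `k` below the size of `F`. By Cayley–Hamilton the row space of `O` is
invariant under `F`, so `O * F = G * O` for some matrix `G`, and the moment conditions say that
`O *ᵥ r` is the all-ones vector `𝟙`, which `G` therefore fixes. Applying `O` to the ancilla turns a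
dilated trajectory started at `r ⊗ x 0` into a solution of the dilated system with `G` in place of
`F`, started at `𝟙 ⊗ x 0`. Since `G` fixes `𝟙`, another solution with the same initial value is
`𝟙 ⊗ x t`, so the two agree by uniqueness. The row of `O` with index `0` is `l`.
-/

section LinearODE

theorem eq_of_hasDerivAt_clm_apply {𝕜 E : Type*} [NontriviallyNormedField 𝕜]
    [NormedAddCommGroup E] [NormedSpace 𝕜 E] [NormedSpace ℝ E] {L : ℝ → E →L[𝕜] E}
    (hL : Continuous L) {f g : ℝ → E} (hf : ∀ t, HasDerivAt f (L t (f t)) t)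
    (hg : ∀ t, HasDerivAt g (L t (g t)) t) {t₀ : ℝ} (h₀ : f t₀ = g t₀) : f = g := by
  ext t
  obtain ⟨a, b, ht, ht₀⟩ : ∃ a b, t ∈ Set.Ioo a b ∧ t₀ ∈ Set.Ioo a b :=
    ⟨min t t₀ - 1, max t t₀ + 1, by grind⟩
  obtain ⟨C, hC⟩ := isCompact_Icc.exists_bound_of_continuousOn (hL.continuousOn (s := Set.Icc a b))
  have hLip : ∀ s ∈ Set.Ioo a b, LipschitzOnWith C.toNNReal (L s) Set.univ := fun s hs =>
    ((L s).lipschitz.weaken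
      (NNReal.le_toNNReal_of_coe_le (hC s (Set.Ioo_subset_Icc_self hs)))).lipschitzOnWith
  exact ODE_solution_unique_of_mem_Ioo hLip ht₀ (fun s _ => ⟨hf s, Set.mem_univ _⟩)
    (fun s _ => ⟨hg s, Set.mem_univ _⟩) h₀ ht

theorem eq_of_hasDerivAt_mulVec {𝕜 n : Type*} [RCLike 𝕜] [Fintype n] {M : ℝ → Matrix n n 𝕜}
    (hM : Continuous M) {f g : ℝ → n → 𝕜} (hf : ∀ t, HasDerivAt f (M t *ᵥ f t) t)
    (hg : ∀ t, HasDerivAt g (M t *ᵥ g t) t) {t₀ : ℝ} (h₀ : f t₀ = g t₀) : f = g := by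
  classical
  let toCLM : Matrix n n 𝕜 →ₗ[𝕜] (n → 𝕜) →L[𝕜] n → 𝕜 :=
    (toLin'.trans LinearMap.toContinuousLinearMap).toLinearMap
  exact eq_of_hasDerivAt_clm_apply (toCLM.continuous_of_finiteDimensional.comp hM) hf hg h₀

variable {𝕜 R m n : Type*} [NontriviallyNormedField 𝕜] [NormedRing R] [NormedAlgebra 𝕜 R]
  [Finite m]

theorem hasDerivAt_mulVec_const [Fintype n] {Y : 𝕜 → Matrix m n R} {Y' : Matrix m n R} {t : 𝕜}
    (hY : ∀ i j, HasDerivAt (fun s => Y s i j) (Y' i j) t) (v : n → R) :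
    HasDerivAt (fun s => Y s *ᵥ v) (Y' *ᵥ v) t := by
  cases nonempty_fintype m
  exact hasDerivAt_pi.2 fun i => HasDerivAt.fun_sum fun j _ => (hY i j).mul_const (v j)

theorem hasDerivAt_const_mulVec [Fintype n] (M : Matrix m n R) {y : 𝕜 → n → R} {y' : n → R}
    {t : 𝕜} (hy : HasDerivAt y y' t) : HasDerivAt (fun s => M *ᵥ y s) (M *ᵥ y') t := by
  cases nonempty_fintype m
  exact hasDerivAt_pi.2 fun i =>
    HasDerivAt.fun_sum fun j _ => (hasDerivAt_pi.1 hy j).const_mul (M i j)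

theorem hasDerivAt_vec_vecMulVec_const [Finite n] {x : 𝕜 → m → R} {x' : m → R} {t : 𝕜}
    (hx : HasDerivAt x x' t) (e : n → R) :
    HasDerivAt (fun s => vec (vecMulVec (x s) e)) (vec (vecMulVec x' e)) t := by
  cases nonempty_fintype m
  cases nonempty_fintype n
  exact hasDerivAt_pi.2 fun p => (hasDerivAt_pi.1 hx p.2).mul_const (e p.1)

end LinearODE

section DilatedGenerator

variable {R ι κ m : Type*} [CommSemiring R] [DecidableEq ι] [DecidableEq κ]

/-- The generator `1 ⊗ A + F ⊗ B` of the dilation with ancilla matrix `F` of a linear system with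
generator `A + B`. Its states are indexed by (ancilla, system) pairs, so the pure tensor `e ⊗ x` is
encoded as `vec (vecMulVec x e)`. -/
def dilatedGenerator (F : Matrix ι ι R) (A B : Matrix m m R) : Matrix (ι × m) (ι × m) R :=
  1 ⊗ₖ A + F ⊗ₖ B

theorem continuous_dilatedGenerator {T : Type*} [TopologicalSpace T] [TopologicalSpace R]
    [IsTopologicalSemiring R] (F : Matrix ι ι R) {A B : T → Matrix m m R} (hA : Continuous A)
    (hB : Continuous B) : Continuous fun t => dilatedGenerator F (A t) (B t) :=
  continuous_matrix fun p q =>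
    (continuous_const.mul (hA.matrix_elem p.2 q.2)).add
      (continuous_const.mul (hB.matrix_elem p.2 q.2))

variable [Fintype ι] [Fintype κ] [Fintype m]

theorem kronecker_one_mul_dilatedGenerator [DecidableEq m] {P : Matrix κ ι R} {F : Matrix ι ι R}
    {G : Matrix κ κ R} (hP : P * F = G * P) (A B : Matrix m m R) :
    P ⊗ₖ (1 : Matrix m m R) * dilatedGenerator F A B =
      dilatedGenerator G A B * P ⊗ₖ (1 : Matrix m m R) := by
  simp only [dilatedGenerator, Matrix.mul_add, Matrix.add_mul, ← mul_kronecker_mul, hP,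
    Matrix.one_mul, Matrix.mul_one]

theorem dilatedGenerator_mulVec_vec_vecMulVec {F : Matrix ι ι R} {e : ι → R} (he : F *ᵥ e = e)
    (A B : Matrix m m R) (x : m → R) :
    dilatedGenerator F A B *ᵥ vec (vecMulVec x e) = vec (vecMulVec ((A + B) *ᵥ x) e) := by
  simp only [dilatedGenerator, Matrix.add_mulVec, kronecker_mulVec_vec, mul_vecMulVec,
    vecMulVec_mul, vecMul_transpose, one_mulVec, he, add_vecMulVec, vec_add]

end DilatedGenerator

section ObservabilityMatrix

variable {R ι : Type*} [CommRing R] [Fintype ι] [DecidableEq ι]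

/-- The observability matrix of the pair `(F, l)` in the sense of control theory, with rows
`l ᵥ* F ^ k` for `k < card ι`. -/
def observabilityMatrix (F : Matrix ι ι R) (l : ι → R) : Matrix (Fin (Fintype.card ι)) ι R :=
  Matrix.of fun k => l ᵥ* F ^ (k : ℕ)

theorem pow_mem_span_range_pow_fin_card (F : Matrix ι ι R) (k : ℕ) :
    F ^ k ∈ Submodule.span R (Set.range fun j : Fin (Fintype.card ι) => F ^ (j : ℕ)) := by
  nontriviality R
  have hspan := Submodule.span_range_natDegree_eq_adjoin F.charpoly_monic F.aeval_self_charpoly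
  have hk : F ^ k ∈ Subalgebra.toSubmodule (Algebra.adjoin R {F}) :=
    pow_mem (Algebra.self_mem_adjoin_singleton R F) k
  rw [← hspan, F.charpoly_natDegree_eq_dim] at hk
  refine Submodule.span_mono (fun M hM => ?_) hk
  obtain ⟨j, hj, rfl⟩ : ∃ j < Fintype.card ι, F ^ j = M := by simpa using hM
  exact ⟨⟨j, hj⟩, rfl⟩

theorem exists_vecMul_observabilityMatrix_eq (F : Matrix ι ι R) (l : ι → R) (k : ℕ) :
    ∃ c, c ᵥ* observabilityMatrix F l = l ᵥ* F ^ k := by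
  obtain ⟨c, hc⟩ := (Submodule.mem_span_range_iff_exists_fun R).1
    (pow_mem_span_range_pow_fin_card F k)
  refine ⟨c, ?_⟩
  rw [← hc, vecMul_sum, vecMul_eq_sum]
  exact Finset.sum_congr rfl fun j _ => (vecMul_smul l (c j) (F ^ (j : ℕ))).symm

theorem exists_observabilityMatrix_mul_eq (F : Matrix ι ι R) (l : ι → R) :
    ∃ G : Matrix (Fin (Fintype.card ι)) (Fin (Fintype.card ι)) R,
      observabilityMatrix F l * F = G * observabilityMatrix F l := by
  choose c hc using exists_vecMul_observabilityMatrix_eq F l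
  refine ⟨Matrix.of fun k => c (k + 1), ?_⟩
  refine funext fun k => ?_
  calc l ᵥ* F ^ (k : ℕ) ᵥ* F = l ᵥ* F ^ (k + 1 : ℕ) := by rw [vecMul_vecMul, pow_succ]
    _ = c (k + 1) ᵥ* observabilityMatrix F l := (hc _).symm

theorem observabilityMatrix_mulVec_eq_one {F : Matrix ι ι R} {l r : ι → R}
    (hmom : ∀ k : ℕ, l ⬝ᵥ F ^ k *ᵥ r = 1) : observabilityMatrix F l *ᵥ r = 1 :=
  funext fun k => (dotProduct_mulVec l (F ^ (k : ℕ)) r).symm.trans (hmom k)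

theorem mulVec_one_of_observabilityMatrix_mul_eq {F : Matrix ι ι R} {l r : ι → R}
    (hmom : ∀ k : ℕ, l ⬝ᵥ F ^ k *ᵥ r = 1)
    {G : Matrix (Fin (Fintype.card ι)) (Fin (Fintype.card ι)) R}
    (hG : observabilityMatrix F l * F = G * observabilityMatrix F l) : G *ᵥ 1 = 1 := by
  have hmom_succ : ∀ k : ℕ, l ⬝ᵥ F ^ k *ᵥ (F *ᵥ r) = 1 := fun k => by
    rw [mulVec_mulVec, ← pow_succ, hmom]
  calc G *ᵥ 1 = G *ᵥ (observabilityMatrix F l *ᵥ r) := by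
        rw [observabilityMatrix_mulVec_eq_one hmom]
    _ = observabilityMatrix F l *ᵥ (F *ᵥ r) := by rw [mulVec_mulVec, ← hG, mulVec_mulVec]
    _ = 1 := observabilityMatrix_mulVec_eq_one hmom_succ

end ObservabilityMatrix

section Dilation

variable {𝕜 ι m : Type*} [RCLike 𝕜] [Fintype ι] [DecidableEq ι] [Fintype m]
  {A B : ℝ → Matrix m m 𝕜} {F : Matrix ι ι 𝕜} {l r : ι → 𝕜}

theorem observabilityMatrix_kronecker_mulVec_dilated_solution [DecidableEq m] (hA : Continuous A)
    (hB : Continuous B) (hmom : ∀ k : ℕ, l ⬝ᵥ F ^ k *ᵥ r = 1)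
    {x : ℝ → m → 𝕜} (hx : ∀ t, HasDerivAt x ((A t + B t) *ᵥ x t) t) {ψ : ℝ → ι × m → 𝕜}
    (hψ : ∀ t, HasDerivAt ψ (dilatedGenerator F (A t) (B t) *ᵥ ψ t) t)
    {t₀ : ℝ} (h₀ : ψ t₀ = vec (vecMulVec (x t₀) r)) (t : ℝ) :
    (observabilityMatrix F l ⊗ₖ (1 : Matrix m m 𝕜)) *ᵥ ψ t = vec (vecMulVec (x t) 1) := by
  obtain ⟨G, hG⟩ := exists_observabilityMatrix_mul_eq F l
  set P := observabilityMatrix F l ⊗ₖ (1 : Matrix m m 𝕜)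
  have h_observed (s) :
      HasDerivAt (fun τ => P *ᵥ ψ τ) (dilatedGenerator G (A s) (B s) *ᵥ (P *ᵥ ψ s)) s := by
    rw [mulVec_mulVec, ← kronecker_one_mul_dilatedGenerator hG, ← mulVec_mulVec]
    exact hasDerivAt_const_mulVec P (hψ s)
  have h_pure (s) : HasDerivAt (fun τ => vec (vecMulVec (x τ) 1))
      (dilatedGenerator G (A s) (B s) *ᵥ vec (vecMulVec (x s) 1)) s := by
    rw [dilatedGenerator_mulVec_vec_vecMulVec (mulVec_one_of_observabilityMatrix_mul_eq hmom hG)]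
    exact hasDerivAt_vec_vecMulVec_const (hx s) 1
  have h_init : P *ᵥ ψ t₀ = vec (vecMulVec (x t₀) 1) := by
    rw [h₀, kronecker_mulVec_vec, Matrix.one_mul, vecMulVec_mul, vecMul_transpose,
      observabilityMatrix_mulVec_eq_one hmom]
  exact congrFun (eq_of_hasDerivAt_mulVec (continuous_dilatedGenerator G hA hB)
    h_observed h_pure h_init) t

theorem sum_mul_dilated_solution_eq (hA : Continuous A) (hB : Continuous B)
    (hmom : ∀ k : ℕ, l ⬝ᵥ F ^ k *ᵥ r = 1)
    {x : ℝ → m → 𝕜} (hx : ∀ t, HasDerivAt x ((A t + B t) *ᵥ x t) t) {ψ : ℝ → ι × m → 𝕜}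
    (hψ : ∀ t, HasDerivAt ψ (dilatedGenerator F (A t) (B t) *ᵥ ψ t) t)
    {t₀ : ℝ} (h₀ : ψ t₀ = vec (vecMulVec (x t₀) r)) (t : ℝ) (a : m) :
    ∑ i, l i * ψ t (i, a) = x t a := by
  classical
  have : Nonempty ι := by
    by_contra hι
    rw [not_nonempty_iff] at hι
    simpa using hmom 0
  let k₀ : Fin (Fintype.card ι) := ⟨0, Fintype.card_pos⟩
  have h := congrFun (observabilityMatrix_kronecker_mulVec_dilated_solution hA hB hmom hx hψ h₀ t)
    (k₀, a)
  simpa [mulVec, dotProduct, Fintype.sum_prod_type, observabilityMatrix, one_apply, k₀] using h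

theorem moment_fulfilling_exact_dilation_time_dependent_general [DecidableEq m]
    (hA : Continuous A) (hB : Continuous B) (hmom : ∀ k : ℕ, l ⬝ᵥ F ^ k *ᵥ r = 1)
    {X : ℝ → Matrix m m 𝕜}
    (hX : ∀ t a b, HasDerivAt (fun s => X s a b) (((A t + B t) * X t) a b) t) (hX0 : X 0 = 1)
    {Ψ : ℝ → Matrix (ι × m) (ι × m) 𝕜}
    (hΨ : ∀ t p q, HasDerivAt (fun s => Ψ s p q)
      ((dilatedGenerator F (A t) (B t) * Ψ t) p q) t) (hΨ0 : Ψ 0 = 1) (t : ℝ) (a b : m) :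
    ∑ i, ∑ j, l i * Ψ t (i, a) (j, b) * r j = X t a b := by
  let e : m → 𝕜 := Pi.single b 1
  have h_col : ∑ i, l i * (Ψ t *ᵥ vec (vecMulVec e r)) (i, a) = (X t *ᵥ e) a := by
    refine sum_mul_dilated_solution_eq hA hB hmom (x := fun s => X s *ᵥ e)
      (ψ := fun s => Ψ s *ᵥ vec (vecMulVec e r)) (t₀ := 0) (fun s => ?_) (fun s => ?_) ?_ t a
    · rw [mulVec_mulVec]
      exact hasDerivAt_mulVec_const (hX s) e
    · rw [mulVec_mulVec]
      exact hasDerivAt_mulVec_const (hΨ s) _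
    · rw [hX0, hΨ0, one_mulVec, one_mulVec]
  simpa [e, mulVec, dotProduct, Fintype.sum_prod_type, vecMulVec_apply, Pi.single_apply,
    Finset.mul_sum, mul_assoc] using h_col

end Dilation

/-- **Moment-fulfilling exact dilation, time-dependent case.**
If `l^T F^k r = 1` for all `k ≥ 0`, and `X`, `Ψ` are the time-ordered propagators of the
original system `X' = (-iH(t)+K(t))X` and of the dilated system
`Ψ' = (-i(Iₙ ⊗ H(t)) + F ⊗ K(t))Ψ` respectively (with identity initial data), then
contracting `Ψ(t)` with `l` and `r` in the ancilla factor reproduces `X(t)`. -/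
theorem moment_fulfilling_exact_dilation_time_dependent
    (N n : ℕ) (hN : 1 ≤ N) (hn : 1 ≤ n)
    (H K : ℝ → Matrix (Fin N) (Fin N) ℂ)
    (hHcont : Continuous H) (hKcont : Continuous K)
    (F : Matrix (Fin n) (Fin n) ℂ) (r l : Fin n → ℂ)
    (hmom : ∀ k : ℕ, l ⬝ᵥ (F ^ k).mulVec r = 1)
    (X : ℝ → Matrix (Fin N) (Fin N) ℂ)
    (hX : ∀ (t : ℝ) (a b : Fin N),
      HasDerivAt (fun s => X s a b) ((((-Complex.I) • H t + K t) * X t) a b) t)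
    (hX0 : X 0 = 1)
    (Ψ : ℝ → Matrix (Fin n × Fin N) (Fin n × Fin N) ℂ)
    (hΨ : ∀ (t : ℝ) (ia jb : Fin n × Fin N),
      HasDerivAt (fun s => Ψ s ia jb)
        ((((-Complex.I) • ((1 : Matrix (Fin n) (Fin n) ℂ) ⊗ₖ H t) + F ⊗ₖ K t) * Ψ t) ia jb) t)
    (hΨ0 : Ψ 0 = 1) :
    ∀ t : ℝ, 0 ≤ t → ∀ a b : Fin N,
      ∑ i : Fin n, ∑ j : Fin n, l i * Ψ t (i, a) (j, b) * r j = X t a b := by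
  intro t _ a b
  simp only [← kronecker_smul] at hΨ
  exact moment_fulfilling_exact_dilation_time_dependent_general
    (A := (-Complex.I) • H) (hHcont.const_smul _) hKcont hmom hX hX0 hΨ hΨ0 t a b
end

section
/- Let $\mathcal{H}$ be a complex Hilbert space, and let $F : \mathcal{H} \to \mathcal{H}$ be a bounded linear operator that is skew-adjoint, i.e., $F^{\dagger} = -F$. Then there do not exist vectors $l, r \in \mathcal{H}$ such that $\langle l, F^k r \rangle = 1$ for every integer $k \ge 0$. In other words, the moment conditions can never be fulfilled with a skew-Hermitian generator and both the encoding vector and the evaluation vector lying inside the Hilbert space. -/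
/-!
Let `K` be the space of all `x` with `⟪l, F^(k+1) x⟫ = μ ⟪l, F^k x⟫` for every `k`; it is closed and
`F`-invariant. The orthogonal projection `p` of `l` onto `K` represents `⟪l, ·⟫` on `K`, so
`⟪p, F p⟫ = μ ⟪p, p⟫`. If `μ` is not in the numerical range of `F`, then `p = 0`, and `l` is
orthogonal to every vector of `K`. A moment-fulfilling pair has `r ∈ K` for `μ = 1` but
`⟪l, r⟫ = 1`, whereas the numerical range of a skew-adjoint `F` is purely imaginary.
-/

open scoped InnerProductSpace

section

variable {𝕜 E : Type*} [RCLike 𝕜] [NormedAddCommGroup E] [InnerProductSpace 𝕜 E]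

lemma inner_starProjection_left_of_mem {K : Submodule 𝕜 E} [K.HasOrthogonalProjection]
    (l : E) {x : E} (hx : x ∈ K) : ⟪K.starProjection l, x⟫_𝕜 = ⟪l, x⟫_𝕜 := by
  rw [K.inner_starProjection_left_eq_right, K.starProjection_eq_self_iff.mpr hx]

lemma inner_starProjection_apply_self {K : Submodule 𝕜 E} [K.HasOrthogonalProjection]
    {F : E → E} {l : E} {μ : 𝕜} (hFK : Set.MapsTo F K K)
    (hl : ∀ x ∈ K, ⟪l, F x⟫_𝕜 = μ * ⟪l, x⟫_𝕜) :
    ⟪K.starProjection l, F (K.starProjection l)⟫_𝕜 =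
      μ * ⟪K.starProjection l, K.starProjection l⟫_𝕜 := by
  have hp : K.starProjection l ∈ K := K.starProjection_apply_mem l
  rw [inner_starProjection_left_of_mem l (hFK hp), hl _ hp, inner_starProjection_left_of_mem l hp]

/-- The space of vectors whose moments `⟪l, F ^ k x⟫` form a geometric sequence of ratio `μ`.
It is the largest `F`-invariant subspace on which `⟪l, F x⟫ = μ * ⟪l, x⟫`, and is encoded as an
intersection of kernels of continuous functionals, so that it is visibly closed. -/
noncomputable def geometricMomentSubspace (F : E →L[𝕜] E) (l : E) (μ : 𝕜) : Submodule 𝕜 E :=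
  ⨅ k : ℕ, (innerSL 𝕜 l ∘L (F ^ (k + 1) - μ • F ^ k)).ker

namespace geometricMomentSubspace

variable {F : E →L[𝕜] E} {l : E} {μ : 𝕜}

lemma mem_iff {x : E} : x ∈ geometricMomentSubspace F l μ ↔
    ∀ k : ℕ, ⟪l, (F ^ (k + 1)) x⟫_𝕜 = μ * ⟪l, (F ^ k) x⟫_𝕜 := by
  simp only [geometricMomentSubspace, Submodule.mem_iInf, LinearMap.mem_ker,
    ContinuousLinearMap.coe_coe, ContinuousLinearMap.comp_apply, sub_apply, smul_apply,
    innerSL_apply_apply, inner_sub_right, inner_smul_right, sub_eq_zero]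

lemma isClosed : IsClosed (geometricMomentSubspace F l μ : Set E) := by
  rw [geometricMomentSubspace, Submodule.coe_iInf]
  exact isClosed_iInter fun k ↦ ContinuousLinearMap.isClosed_ker _

lemma mapsTo : Set.MapsTo F (geometricMomentSubspace F l μ) (geometricMomentSubspace F l μ) :=
  fun _ hx ↦ mem_iff.mpr fun k ↦ mem_iff.mp hx (k + 1)

lemma inner_apply {x : E} (hx : x ∈ geometricMomentSubspace F l μ) :
    ⟪l, F x⟫_𝕜 = μ * ⟪l, x⟫_𝕜 := by
  simpa using mem_iff.mp hx 0

end geometricMomentSubspace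

variable [CompleteSpace E]

lemma inner_eq_zero_of_mem_geometricMomentSubspace {F : E →L[𝕜] E} {l r : E} {μ : 𝕜}
    (hF : ∀ x, ⟪x, F x⟫_𝕜 = μ * ⟪x, x⟫_𝕜 → x = 0) (hr : r ∈ geometricMomentSubspace F l μ) :
    ⟪l, r⟫_𝕜 = 0 := by
  let K := geometricMomentSubspace F l μ
  have : CompleteSpace K := geometricMomentSubspace.isClosed.completeSpace_coe
  have hp : K.starProjection l = 0 :=
    hF _ <| inner_starProjection_apply_self geometricMomentSubspace.mapsTo
      fun _ ↦ geometricMomentSubspace.inner_apply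
  rw [← inner_starProjection_left_of_mem l hr, hp, inner_zero_left]

lemma re_inner_apply_self_eq_zero_of_adjoint_eq_neg {F : E →L[𝕜] E}
    (hF : ContinuousLinearMap.adjoint F = -F) (x : E) : RCLike.re ⟪x, F x⟫_𝕜 = 0 := by
  have h : RCLike.re ⟪x, F x⟫_𝕜 = -RCLike.re ⟪x, F x⟫_𝕜 := calc
    RCLike.re ⟪x, F x⟫_𝕜 = RCLike.re ⟪ContinuousLinearMap.adjoint F x, x⟫_𝕜 := by
      rw [ContinuousLinearMap.adjoint_inner_left]
    _ = -RCLike.re ⟪F x, x⟫_𝕜 := by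
      rw [hF, neg_apply, inner_neg_left, map_neg]
    _ = -RCLike.re ⟪x, F x⟫_𝕜 := by rw [inner_re_symm]
  exact self_eq_neg.mp h

lemma eq_zero_of_adjoint_eq_neg_of_inner_apply_self {F : E →L[𝕜] E}
    (hF : ContinuousLinearMap.adjoint F = -F) {x : E} (hx : ⟪x, F x⟫_𝕜 = ⟪x, x⟫_𝕜) : x = 0 := by
  rw [← inner_self_eq_zero (𝕜 := 𝕜), ← inner_self_ofReal_re, ← hx,
    re_inner_apply_self_eq_zero_of_adjoint_eq_neg hF, RCLike.ofReal_zero]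

theorem no_moment_fulfilling_pair_in_hilbert_space_general (F : E →L[𝕜] E) (μ : 𝕜)
    (hF : ∀ x, ⟪x, F x⟫_𝕜 = μ * ⟪x, x⟫_𝕜 → x = 0) :
    ¬ ∃ l r : E, ∀ k : ℕ, ⟪l, (F ^ k) r⟫_𝕜 = μ ^ k := by
  rintro ⟨l, r, h⟩
  have hr : r ∈ geometricMomentSubspace F l μ :=
    geometricMomentSubspace.mem_iff.mpr fun k ↦ by rw [h, h, pow_succ']
  have h_one : ⟪l, r⟫_𝕜 = 1 := by simpa using h 0
  exact one_ne_zero (h_one.symm.trans (inner_eq_zero_of_mem_geometricMomentSubspace hF hr))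

end

/-- **Moment conditions cannot be fulfilled inside the Hilbert space.**
If `F` is a bounded skew-adjoint operator on a complex Hilbert space, then there are no
vectors `l, r` in the Hilbert space with `⟪l, F^k r⟫ = 1` for all integers `k ≥ 0`. -/
theorem no_moment_fulfilling_pair_in_hilbert_space
    {H : Type*} [NormedAddCommGroup H] [InnerProductSpace ℂ H] [CompleteSpace H]
    (F : H →L[ℂ] H) (hF : ContinuousLinearMap.adjoint F = -F) :
    ¬ ∃ l r : H, ∀ k : ℕ, (inner ℂ l ((F ^ k) r) : ℂ) = 1 := by
  simpa only [one_pow] using no_moment_fulfilling_pair_in_hilbert_space_general F 1 fun x hx ↦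
    eq_zero_of_adjoint_eq_neg_of_inner_apply_self hF (by rwa [one_mul] at hx)
end

section
/- Let $M \ge 2$, $h = 1/M$, $p_j = j h$, and let $F_h$ be the $(M+1) \times (M+1)$ real matrix acting on vectors $v = (v_0, \dots, v_M)$ by $(F_h v)_0 = \tfrac{1}{2\sqrt{2}} v_1$, $(F_h v)_1 = \tfrac{3}{4} v_2 - \tfrac{1}{4\sqrt{2}} v_0$, $(F_h v)_i = \tfrac{p_{i+1} + p_i}{4h} v_{i+1} - \tfrac{p_i + p_{i-1}}{4h} v_{i-1}$ for $2 \le i \le M - 1$, and $(F_h v)_M = 0$. Let $W = \mathrm{diag}(\tfrac{1}{2}, 1, \dots, 1, \tfrac{1}{2})$. Then for all vectors $u, v \in \mathbb{C}^{M+1}$ with $u_M = v_M = 0$, one has $\langle u, F_h v \rangle_W + \langle F_h u, v \rangle_W = 0$, where $\langle u, v \rangle_W = \sum_{j=0}^{M} W_{jj}\, \overline{u_j}\, v_j$; that is, $F_h$ is skew-Hermitian in the trapezoidal-weighted inner product on grid vectors satisfying the zero boundary condition at $p = 1$. -/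
/-!
Away from the last row, the weighted matrix `W F_h` coincides with a tridiagonal matrix `S`
satisfying `Sᵀ = -S`: the factors `1 / (2√2)` and `1 / (4√2)` in the rows `0` and `1` of `F_h`
differ by exactly the trapezoidal weight `1/2` of the boundary node. The last row does not
contribute when `u` and `v` vanish at the last node, so the left-hand side is
`⟨u, S v⟩ + ⟨S u, v⟩` for the unweighted inner product.
-/

/-- The second-order summation-by-parts finite-difference approximation `F_h` of the
operator `F = p ∂_p + 1/2` on the uniform grid `p_j = j h`, `h = 1/M`, of `[0,1]`. -/
noncomputable def FhMat (M : ℕ) : Matrix (Fin (M + 1)) (Fin (M + 1)) ℝ :=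
  fun i j =>
    let h : ℝ := 1 / M
    let p : ℕ → ℝ := fun k => k * h
    if (i : ℕ) = 0 then (if (j : ℕ) = 1 then 1 / (2 * Real.sqrt 2) else 0)
    else if (i : ℕ) = 1 then
      (if (j : ℕ) = 2 then 3 / 4 else if (j : ℕ) = 0 then -(1 / (4 * Real.sqrt 2)) else 0)
    else if (i : ℕ) = M then 0
    else if (j : ℕ) = (i : ℕ) + 1 then (p ((i : ℕ) + 1) + p (i : ℕ)) / (4 * h)
    else if (j : ℕ) + 1 = (i : ℕ) then -((p (i : ℕ) + p ((i : ℕ) - 1)) / (4 * h))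
    else 0

open Matrix

theorem star_dotProduct_mulVec_add_star_mulVec_dotProduct {R n : Type*} [NonUnitalRing R]
    [StarRing R] [Fintype n] {A : Matrix n n R} (hA : Aᴴ = -A) (u v : n → R) :
    star u ⬝ᵥ A *ᵥ v + star (A *ᵥ u) ⬝ᵥ v = 0 := by
  rw [star_mulVec, hA, vecMul_neg, neg_dotProduct, dotProduct_mulVec, add_neg_cancel]

theorem conjTranspose_map_of_transpose_eq_neg {α β n : Type*} [AddGroup α] [AddGroup β] [Star β]
    {A : Matrix n n α} (hA : Aᵀ = -A) (f : α →+ β) (hf : ∀ x, IsSelfAdjoint (f x)) :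
    (A.map f)ᴴ = -A.map f := by
  ext i j
  have hij : A j i = -A i j := congr_fun₂ hA i j
  rw [conjTranspose_apply, map_apply, (hf _).star_eq, hij, map_neg, Matrix.neg_apply, map_apply]

/-- The tridiagonal matrix of a central difference: zero diagonal, `c k` at `(k, k + 1)` and
`-c k` at `(k + 1, k)`. Only the coefficients `c k` with `k + 1 < n` occur. -/
def skewTridiagonal {R : Type*} [Zero R] [Neg R] (n : ℕ) (c : ℕ → R) : Matrix (Fin n) (Fin n) R :=
  fun i j => if (j : ℕ) = i + 1 then c i else if (j : ℕ) + 1 = i then -c j else 0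

theorem transpose_skewTridiagonal {R : Type*} [SubtractionMonoid R] (n : ℕ) (c : ℕ → R) :
    (skewTridiagonal n c)ᵀ = -skewTridiagonal n c := by
  ext i j
  simp only [transpose_apply, Matrix.neg_apply, skewTridiagonal]
  split_ifs <;> first | omega | simp

/-- The diagonal of the trapezoidal weight `W = diag(1/2, 1, …, 1, 1/2)` on the nodes
`0, …, M`. -/
noncomputable def trapezoidWeight (M : ℕ) (j : Fin (M + 1)) : ℝ :=
  if (j : ℕ) = 0 ∨ (j : ℕ) = M then 1 / 2 else 1

/-- The entry of `W F_h` at `(k, k + 1)`, for `k < M`. If `k ≠ 0` it is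
`(p (k + 1) + p k) / (4 h)`, which does not depend on `h`. -/
noncomputable def fhCoeff (k : ℕ) : ℝ :=
  if k = 0 then 1 / (4 * √2) else (2 * k + 1) / 4

theorem fhCoeff_zero : fhCoeff 0 = 1 / (4 * √2) := if_pos rfl

theorem fhCoeff_of_ne_zero {k : ℕ} (hk : k ≠ 0) : fhCoeff k = (2 * k + 1) / 4 := if_neg hk

section Rows

variable {M : ℕ} {i : Fin (M + 1)}

theorem half_mul_FhMat_apply_of_eq_zero (hi : (i : ℕ) = 0) (j : Fin (M + 1)) :
    1 / 2 * FhMat M i j = skewTridiagonal (M + 1) fhCoeff i j := by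
  have coeff : 1 / 2 * (1 / (2 * √2)) = fhCoeff 0 := by rw [fhCoeff_zero]; ring
  simp only [FhMat, skewTridiagonal, hi, if_true, zero_add, mul_ite, mul_zero, coeff,
    Nat.add_one_ne_zero, if_false]

theorem FhMat_apply_of_eq_one (hi : (i : ℕ) = 1) (j : Fin (M + 1)) :
    FhMat M i j = skewTridiagonal (M + 1) fhCoeff i j := by
  have coeff : fhCoeff 1 = 3 / 4 := by norm_num [fhCoeff_of_ne_zero]
  simp only [FhMat, skewTridiagonal, hi, one_ne_zero, if_true, if_false, Nat.reduceAdd,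
    Nat.add_eq_right, coeff]
  split_ifs with _ hj
  · rfl
  · rw [hj, fhCoeff_zero]
  · rfl

theorem FhMat_apply_of_two_le (hi : 2 ≤ (i : ℕ)) (hiM : (i : ℕ) ≠ M) (j : Fin (M + 1)) :
    FhMat M i j = skewTridiagonal (M + 1) fhCoeff i j := by
  have hM : (M : ℝ) ≠ 0 := Nat.cast_ne_zero.mpr (by omega)
  have coeff {k : ℕ} (hk : k ≠ 0) :
      ((k + 1 : ℕ) * (1 / M) + k * (1 / M)) / (4 * (1 / M)) = fhCoeff k := by
    rw [fhCoeff_of_ne_zero hk]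
    push_cast
    field_simp
    ring
  simp only [FhMat, skewTridiagonal, show (i : ℕ) ≠ 0 by omega, show (i : ℕ) ≠ 1 by omega,
    hiM, if_false]
  split_ifs with _ hj
  · exact coeff (by omega)
  · rw [← hj, Nat.add_sub_cancel, coeff (by omega)]
  · rfl

theorem trapezoidWeight_mul_FhMat_apply (hiM : (i : ℕ) ≠ M) (j : Fin (M + 1)) :
    trapezoidWeight M i * FhMat M i j = skewTridiagonal (M + 1) fhCoeff i j := by
  by_cases h0 : (i : ℕ) = 0
  · rw [trapezoidWeight, if_pos (.inl h0), half_mul_FhMat_apply_of_eq_zero h0]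
  · rw [trapezoidWeight, if_neg (not_or.mpr ⟨h0, hiM⟩), one_mul]
    by_cases h1 : (i : ℕ) = 1
    · exact FhMat_apply_of_eq_one h1 j
    · exact FhMat_apply_of_two_le (by omega) hiM j

theorem trapezoidWeight_mul_FhMat_mulVec (hiM : (i : ℕ) ≠ M) (v : Fin (M + 1) → ℂ) :
    (trapezoidWeight M i : ℂ) * ((FhMat M).map ((↑) : ℝ → ℂ) *ᵥ v) i =
      ((skewTridiagonal (M + 1) fhCoeff).map ((↑) : ℝ → ℂ) *ᵥ v) i := by
  simp only [mulVec, dotProduct, map_apply, Finset.mul_sum, ← mul_assoc, ← Complex.ofReal_mul,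
    trapezoidWeight_mul_FhMat_apply hiM]

end Rows

/-- **Discrete skew-Hermiticity of `F_h` in the trapezoidal-weighted inner product.**
For grid vectors `u, v` vanishing at the right boundary node,
`⟨u, F_h v⟩_W + ⟨F_h u, v⟩_W = 0` with `W = diag(1/2, 1, …, 1, 1/2)`. -/
theorem Fh_skew_hermitian_weighted
    (M : ℕ) (hM : 2 ≤ M)
    (W : Fin (M + 1) → ℝ)
    (hW : W = fun j : Fin (M + 1) => if (j : ℕ) = 0 ∨ (j : ℕ) = M then (1 : ℝ) / 2 else 1)
    (u v : Fin (M + 1) → ℂ)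
    (hu : u (Fin.last M) = 0) (hv : v (Fin.last M) = 0) :
    (∑ j : Fin (M + 1), (W j : ℂ) * (starRingEnd ℂ) (u j) *
        (((FhMat M).map (fun x : ℝ => (x : ℂ))).mulVec v j))
      + ∑ j : Fin (M + 1), (W j : ℂ) *
          (starRingEnd ℂ) (((FhMat M).map (fun x : ℝ => (x : ℂ))).mulVec u j) * v j
      = 0 := by
  have hS := conjTranspose_map_of_transpose_eq_neg (transpose_skewTridiagonal (M + 1) fhCoeff)
    (Complex.ofRealHom : ℝ →+ ℂ) Complex.conj_ofReal
  obtain rfl : W = trapezoidWeight M := hW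
  rw [← star_dotProduct_mulVec_add_star_mulVec_dotProduct hS u v]
  congr 1 <;> refine Finset.sum_congr rfl fun j _ => ?_
  · obtain rfl | hj := eq_or_ne j (Fin.last M)
    · simp [hu]
    · rw [mul_right_comm, trapezoidWeight_mul_FhMat_mulVec (Fin.val_ne_of_ne hj), mul_comm]
      rfl
  · obtain rfl | hj := eq_or_ne j (Fin.last M)
    · simp [hv]
    · rw [← Complex.conj_ofReal, ← map_mul,
        trapezoidWeight_mul_FhMat_mulVec (Fin.val_ne_of_ne hj)]
      rfl
end

section
/- Let $M$ be a positive integer divisible by $4$, $h = 1/M$, $p_j = j h$, and let $F_h$ be the $(M+1) \times (M+1)$ matrix with $(F_h v)_0 = \tfrac{1}{2\sqrt{2}} v_1$, $(F_h v)_1 = \tfrac{3}{4} v_2 - \tfrac{1}{4\sqrt{2}} v_0$, $(F_h v)_i = \tfrac{p_{i+1}+p_i}{4h} v_{i+1} - \tfrac{p_i+p_{i-1}}{4h} v_{i-1}$ for $2 \le i \le M-1$, $(F_h v)_M = 0$. Let $\theta > 0$, $T > 0$, $K_{\max} > 0$ with $\theta K_{\max} T < \tfrac{1}{4e}$, and let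 $\kappa : \mathbb{R} \to \mathbb{R}$ be continuous with $0 \le \kappa(t) \le K_{\max}$ for all $t \in [0, T]$. Suppose $u : \mathbb{R} \to \mathbb{C}^{M+1}$ solves $u'(t) = -\theta \kappa(t)\, F_h u(t)$ with initial data $u(0) = u^R$ satisfying $u^R_j = 0$ for all $j$ with $p_j \le \tfrac{3}{4}$. Then for every $t \in [0, T]$ and every index $i$ with $p_i \le \tfrac{1}{2}$, $|u_i(t)| \le \dfrac{(4 e \theta t K_{\max})^{M/4}}{1 - 4 e \theta t K_{\max}}\, \|u^R\|_2$. -/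
open Real Set Matrix

lemma rpow_natCast_div_le_pow_div_one_sub {x : ℝ} (hx₀ : 0 ≤ x) (hx₁ : x < 1) (m k : ℕ) :
    x ^ ((m : ℝ) / k) ≤ x ^ (m / k) / (1 - x) :=
  calc x ^ ((m : ℝ) / k) ≤ x ^ ((m / k : ℕ) : ℝ) :=
        rpow_le_rpow_of_exponent_ge' hx₀ hx₁.le (Nat.cast_nonneg _) Nat.cast_div_le
    _ = x ^ (m / k) := rpow_natCast x _
    _ ≤ x ^ (m / k) / (1 - x) := le_div_self (pow_nonneg hx₀ _) (by linarith) (by linarith)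

lemma pi_norm_le_sqrt_sum_norm_sq {ι E : Type*} [Fintype ι] [SeminormedAddCommGroup E]
    (v : ι → E) : ‖v‖ ≤ √(∑ j, ‖v j‖ ^ 2) :=
  (pi_norm_le_iff_of_nonneg (sqrt_nonneg _)).2 fun j ↦
    le_sqrt_of_sq_le <|
      Finset.single_le_sum (f := fun j ↦ ‖v j‖ ^ 2) (fun _ _ ↦ sq_nonneg _) (Finset.mem_univ j)

section HopBound

variable {ι 𝕜 : Type*} [Fintype ι] [RCLike 𝕜] {A : Matrix ι ι 𝕜} {R : ℝ}

lemma mul_norm_mulVec_le {a : ι → ℝ} {ρ B : ℝ} {v : ι → 𝕜} {i : ι} (ha : 0 ≤ a i)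
    (hA : ∀ j, A i j ≠ 0 → a i ≤ ρ * a j) (hR : ∑ j, ‖A i j‖ ≤ R) (hρ : 0 ≤ ρ) (hB : 0 ≤ B)
    (hv : ∀ j, a j * ‖v j‖ ≤ B) :
    a i * ‖(A *ᵥ v) i‖ ≤ R * (ρ * B) := by
  have entry_le (j : ι) : a i * ‖A i j * v j‖ ≤ ‖A i j‖ * (ρ * B) := by
    rcases eq_or_ne (A i j) 0 with h | h
    · simp [h]
    calc a i * ‖A i j * v j‖ = ‖A i j‖ * (a i * ‖v j‖) := by rw [norm_mul]; ring
      _ ≤ ‖A i j‖ * (ρ * a j * ‖v j‖) := by gcongr; exact hA j h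
      _ = ‖A i j‖ * (ρ * (a j * ‖v j‖)) := by ring
      _ ≤ ‖A i j‖ * (ρ * B) := by gcongr; exact hv j
  calc a i * ‖(A *ᵥ v) i‖ ≤ a i * ∑ j, ‖A i j * v j‖ := by
        gcongr
        exact norm_sum_le _ _
    _ ≤ ∑ j, ‖A i j‖ * (ρ * B) := by
        rw [Finset.mul_sum]
        exact Finset.sum_le_sum fun j _ ↦ entry_le j
    _ ≤ R * (ρ * B) := by
        rw [← Finset.sum_mul]
        gcongr

variable {c : ℝ → 𝕜} {C T t : ℝ} {u : ℝ → ι → 𝕜}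

lemma mul_norm_le_exp_mul_of_hasDerivWithinAt {a : ι → ℝ} {ρ B : ℝ} (ha : ∀ i, 0 ≤ a i)
    (hA : ∀ i j, A i j ≠ 0 → a i ≤ ρ * a j) (hR : ∀ i, ∑ j, ‖A i j‖ ≤ R) (hρ : 0 ≤ ρ)
    (hc : ∀ s ∈ Icc 0 T, ‖c s‖ ≤ C)
    (hu : ∀ s ∈ Icc 0 T, HasDerivWithinAt u (c s • A *ᵥ u s) (Icc 0 T) s)
    (hu₀ : ∀ j, a j * ‖u 0 j‖ ≤ B) (ht : t ∈ Icc 0 T) (i : ι) :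
    a i * ‖u t i‖ ≤ exp (C * R * ρ * t) * B := by
  let v (s : ℝ) (j : ι) : 𝕜 := a j • u s j
  let v' (s : ℝ) (j : ι) : 𝕜 := a j • (c s • A *ᵥ u s) j
  have norm_v (s : ℝ) (j : ι) : ‖v s j‖ = a j * ‖u s j‖ := by
    rw [norm_smul, norm_of_nonneg (ha j)]
  have hC : 0 ≤ C := (norm_nonneg _).trans (hc t ht)
  have hR₀ : 0 ≤ R := (Finset.sum_nonneg fun _ _ ↦ norm_nonneg _).trans (hR i)
  have hB : 0 ≤ B := (mul_nonneg (ha i) (norm_nonneg _)).trans (hu₀ i)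
  have hv (s : ℝ) (hs : s ∈ Icc 0 T) : HasDerivWithinAt v (v' s) (Icc 0 T) s :=
    hasDerivWithinAt_pi.2 fun j ↦ (hasDerivWithinAt_pi.1 (hu s hs) j).const_smul (a j)
  have norm_v'_le (s : ℝ) (hs : s ∈ Ico 0 T) : ‖v' s‖ ≤ C * R * ρ * ‖v s‖ + 0 := by
    rw [add_zero, pi_norm_le_iff_of_nonneg (by positivity)]
    intro j
    calc ‖v' s j‖ = ‖c s‖ * (a j * ‖(A *ᵥ u s) j‖) := by
          rw [norm_smul, norm_of_nonneg (ha j), Pi.smul_apply, norm_smul, mul_left_comm]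
      _ ≤ C * (R * (ρ * ‖v s‖)) := by
          have mulVec_le := mul_norm_mulVec_le (ha j) (hA j) (hR j) hρ (norm_nonneg (v s))
            fun k ↦ (norm_v s k).symm.trans_le (norm_le_pi_norm (v s) k)
          exact mul_le_mul (hc s (Ico_subset_Icc_self hs)) mulVec_le
            (mul_nonneg (ha j) (norm_nonneg _)) hC
      _ = C * R * ρ * ‖v s‖ := by ring
  have norm_v_zero_le : ‖v 0‖ ≤ B :=
    (pi_norm_le_iff_of_nonneg hB).2 fun j ↦ (norm_v 0 j).trans_le (hu₀ j)
  have gronwall := norm_le_gronwallBound_of_norm_deriv_right_le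
    (fun s hs ↦ (hv s hs).continuousWithinAt)
    (fun s hs ↦ (hv s (Ico_subset_Icc_self hs)).mono_of_mem_nhdsWithin (Icc_mem_nhdsGE_of_mem hs))
    norm_v_zero_le norm_v'_le t ht
  rw [gronwallBound_ε0, sub_zero, mul_comm B] at gronwall
  exact (norm_v t i).symm.trans_le ((norm_le_pi_norm (v t) i).trans gronwall)

variable {ℓ : ι → ℕ} {n : ℕ}

lemma pow_mul_norm_le_exp_mul_norm {ρ : ℝ} (hA : ∀ i j, A i j ≠ 0 → ℓ j ≤ ℓ i + 1)
    (hR : ∀ i, ∑ j, ‖A i j‖ ≤ R) (hρ : 1 ≤ ρ) (hc : ∀ s ∈ Icc 0 T, ‖c s‖ ≤ C)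
    (hu : ∀ s ∈ Icc 0 T, HasDerivWithinAt u (c s • A *ᵥ u s) (Icc 0 T) s)
    (hu₀ : ∀ j, ℓ j < n → u 0 j = 0) (ht : t ∈ Icc 0 T) (i : ι) :
    ρ ^ (n - ℓ i) * ‖u t i‖ ≤ exp (C * R * ρ * t) * ‖u 0‖ := by
  refine mul_norm_le_exp_mul_of_hasDerivWithinAt (a := fun j ↦ ρ ^ (n - ℓ j))
    (fun _ ↦ by positivity) (fun i j hij ↦ ?_) hR (by positivity) hc hu (fun j ↦ ?_) ht i
  · rw [← pow_succ']
    have := hA i j hij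
    exact pow_le_pow_right₀ hρ (by lia)
  · rcases lt_or_ge (ℓ j) n with hj | hj
    · simp [hu₀ j hj]
    · simpa [Nat.sub_eq_zero_of_le hj] using norm_le_pi_norm (u 0) j

theorem norm_le_rpow_mul_norm_of_hasDerivWithinAt {σ : ℝ} {i : ι}
    (hA : ∀ i j, A i j ≠ 0 → ℓ j ≤ ℓ i + 1) (hR : ∀ i, ∑ j, ‖A i j‖ ≤ R)
    (hc : ∀ s ∈ Icc 0 T, ‖c s‖ ≤ C)
    (hu : ∀ s ∈ Icc 0 T, HasDerivWithinAt u (c s • A *ᵥ u s) (Icc 0 T) s)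
    (hu₀ : ∀ j, ℓ j < n → u 0 j = 0) (ht : t ∈ Icc 0 T) (hCR : 0 < C * R)
    (hσ : 0 < σ) (hσi : ℓ i + σ ≤ n) (htσ : C * R * t ≤ σ) :
    ‖u t i‖ ≤ (exp 1 * (C * R * t) / σ) ^ σ * ‖u 0‖ := by
  have hi : ℓ i < n := by exact_mod_cast (lt_add_of_pos_right _ hσ).trans_le hσi
  rcases ht.1.eq_or_lt with rfl | ht₀
  · simp [hu₀ i hi, zero_rpow hσ.ne']
  have hτ : 0 < C * R * t := by positivity
  let ρ := σ / (C * R * t)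
  have hρ : 1 ≤ ρ := (one_le_div hτ).2 htσ
  have hρσ : ρ ^ σ ≤ ρ ^ (n - ℓ i) := by
    rw [← rpow_natCast, Nat.cast_sub hi.le]
    exact rpow_le_rpow_of_exponent_le hρ (le_sub_iff_add_le'.2 hσi)
  have h_exponent : C * R * ρ * t = σ := by
    rw [mul_right_comm, mul_div_cancel₀ _ hτ.ne']
  have h_weighted : ρ ^ σ * ‖u t i‖ ≤ exp σ * ‖u 0‖ :=
    calc ρ ^ σ * ‖u t i‖ ≤ ρ ^ (n - ℓ i) * ‖u t i‖ := by gcongr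
      _ ≤ exp σ * ‖u 0‖ := h_exponent ▸ pow_mul_norm_le_exp_mul_norm hA hR hρ hc hu hu₀ ht i
  calc ‖u t i‖ ≤ exp σ * ‖u 0‖ / ρ ^ σ := (le_div_iff₀' (by positivity)).2 h_weighted
    _ = (exp 1 / ρ) ^ σ * ‖u 0‖ := by
        rw [div_rpow (exp_pos 1).le (by positivity), exp_one_rpow]
        ring
    _ = (exp 1 * (C * R * t) / σ) ^ σ * ‖u 0‖ := by rw [div_div_eq_mul_div]

end HopBound

namespace FhMat

variable {M : ℕ} {i j : Fin (M + 1)}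

lemma apply_eq_zero (hsup : (j : ℕ) ≠ i + 1) (hsub : (j : ℕ) + 1 ≠ i) : FhMat M i j = 0 := by
  grind [FhMat]

lemma abs_apply_le_of_eq_succ (hij : (j : ℕ) = i + 1) : |FhMat M i j| ≤ ((i : ℕ) + 1) / 2 := by
  have hsqrt : 1 ≤ √2 := one_le_sqrt.2 one_le_two
  have hM : (M : ℝ) ≠ 0 := by norm_cast; lia
  rcases lt_trichotomy (i : ℕ) 1 with hi | hi | hi
  · have : |1 / (2 * √2)| ≤ 1 / 2 := by
      rw [abs_of_nonneg (by positivity)]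
      gcongr
      linarith
    simpa [FhMat, hij, Nat.lt_one_iff.1 hi] using this
  · norm_num [FhMat, hij, hi, abs_of_nonneg]
  · have hFh : FhMat M i j = (2 * (i : ℕ) + 1) / 4 := by
      rw [FhMat, if_neg (by lia), if_neg (by lia), if_neg (by lia), if_pos hij]
      push_cast
      field_simp
      ring
    rw [hFh, abs_of_nonneg (by positivity)]
    linarith

lemma abs_apply_le_of_succ_eq (hij : (j : ℕ) + 1 = i) : |FhMat M i j| ≤ (i : ℕ) / 2 := by
  have hsqrt : 1 ≤ √2 := one_le_sqrt.2 one_le_two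
  have hM : (M : ℝ) ≠ 0 := by norm_cast; lia
  rcases eq_or_ne (i : ℕ) 1 with hi | hi
  · have : |1 / (4 * √2)| ≤ 1 / 2 := by
      rw [abs_of_nonneg (by positivity)]
      gcongr
      linarith
    simpa [FhMat, hi, (by lia : (j : ℕ) = 0)] using this
  rcases eq_or_ne (i : ℕ) M with hiM | hiM
  · rw [FhMat, if_neg (by lia), if_neg hi, if_pos hiM, abs_zero]
    positivity
  · have hFh : FhMat M i j = -((2 * (j : ℕ) + 1) / 4) := by
      rw [FhMat, if_neg (by lia), if_neg hi, if_neg hiM, if_neg (by lia), if_pos hij, ← hij,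
        Nat.add_sub_cancel]
      push_cast
      field_simp
      ring
    rw [hFh, abs_neg, abs_of_nonneg (by positivity), ← hij]
    push_cast
    linarith

lemma sum_abs_apply_le (i : Fin (M + 1)) : ∑ j, |FhMat M i j| ≤ M := by
  -- For `i = 0` the second term sits at `j = 0 - 1 = 0`, but its value is `0`.
  let f (k : ℕ) : ℝ :=
    (if k = i + 1 then ((i : ℝ) + 1) / 2 else 0) + if k = i - 1 then (i : ℝ) / 2 else 0
  have abs_le (j : Fin (M + 1)) : |FhMat M i j| ≤ f j := by
    have hf : 0 ≤ f j := by positivity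
    by_cases hsup : (j : ℕ) = i + 1
    · have : f j = ((i : ℝ) + 1) / 2 := by simp [f, hsup, (by lia : (i : ℕ) + 1 ≠ i - 1)]
      exact this ▸ abs_apply_le_of_eq_succ hsup
    by_cases hsub : (j : ℕ) + 1 = i
    · have : f j = (i : ℝ) / 2 := by simp [f, (by lia : (j : ℕ) = i - 1)]
      exact this ▸ abs_apply_le_of_succ_eq hsub
    · simpa [apply_eq_zero hsup hsub] using hf
  calc ∑ j, |FhMat M i j| ≤ ∑ j : Fin (M + 1), f j := Finset.sum_le_sum fun j _ ↦ abs_le j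
    _ = (if (i : ℕ) < M then ((i : ℝ) + 1) / 2 else 0) + (i : ℝ) / 2 := by
        rw [Fin.sum_univ_eq_sum_range, Finset.sum_add_distrib, Finset.sum_ite_eq',
          Finset.sum_ite_eq', if_pos (Finset.mem_range.2 (by lia : (i : ℕ) - 1 < M + 1))]
        simp
    _ ≤ M := by
        have hi : (i : ℝ) ≤ M := by exact_mod_cast i.is_le
        split_ifs with h
        · have : (i : ℝ) + 1 ≤ M := by exact_mod_cast h
          linarith
        · linarith

end FhMat

theorem Fh_finite_propagation_speed_general {M : ℕ} (hM : 0 < M) {θ T Kmax α β : ℝ} (hθ : 0 < θ)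
    (hKmax : 0 < Kmax) (hαβ : α < β) (hCFL : θ * Kmax * T ≤ β - α) {κ : ℝ → ℝ}
    (hκ : ∀ t ∈ Icc 0 T, |κ t| ≤ Kmax) {u : ℝ → Fin (M + 1) → ℂ}
    (hu : ∀ t ∈ Icc 0 T, HasDerivWithinAt u
      (((-(θ * κ t) : ℝ) : ℂ) • ((FhMat M).map fun x : ℝ ↦ (x : ℂ)) *ᵥ u t) (Icc 0 T) t)
    (hu0 : ∀ j : Fin (M + 1), ((j : ℕ) : ℝ) / M < β → u 0 j = 0)
    {t : ℝ} (ht : t ∈ Icc 0 T) {i : Fin (M + 1)} (hi : ((i : ℕ) : ℝ) / M ≤ α) :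
    ‖u t i‖ ≤ (exp 1 * θ * t * Kmax / (β - α)) ^ ((β - α) * M) * ‖u 0‖ := by
  have hM' : (0 : ℝ) < M := by exact_mod_cast hM
  have hδ : 0 < β - α := sub_pos.2 hαβ
  have h_hop (i j : Fin (M + 1)) (hij : ((FhMat M).map fun x : ℝ ↦ (x : ℂ)) i j ≠ 0) :
      (j : ℕ) ≤ i + 1 := by
    contrapose! hij
    simp [FhMat.apply_eq_zero (i := i) (j := j) (by lia) (by lia)]
  have h_speed (s : ℝ) (hs : s ∈ Icc 0 T) : ‖((-(θ * κ s) : ℝ) : ℂ)‖ ≤ θ * Kmax := by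
    rw [Complex.norm_real, norm_neg, norm_mul, norm_of_nonneg hθ.le]
    gcongr
    exact hκ s hs
  have h_support (j : Fin (M + 1)) (hj : (j : ℕ) < ⌈β * M⌉₊) : u 0 j = 0 :=
    hu0 j ((div_lt_iff₀ hM').2 (Nat.lt_ceil.1 hj))
  have h_distance : (i : ℕ) + (β - α) * M ≤ ⌈β * M⌉₊ := by
    linarith [(div_le_iff₀ hM').1 hi, Nat.le_ceil (β * M)]
  have h_time : θ * Kmax * M * t ≤ (β - α) * M :=
    calc θ * Kmax * M * t = θ * Kmax * t * M := by ring
      _ ≤ θ * Kmax * T * M := by gcongr; exact ht.2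
      _ ≤ (β - α) * M := by gcongr
  convert norm_le_rpow_mul_norm_of_hasDerivWithinAt (ℓ := Fin.val) h_hop
    (fun i ↦ by simpa using FhMat.sum_abs_apply_le i) h_speed hu h_support ht (by positivity)
    (by positivity) h_distance h_time using 3
  field_simp

/-- **Finite propagation speed of the semi-discrete dilation scheme.**
If `θ K_max T < 1/(4e)` and the initial data vanishes on the nodes `p_j ≤ 3/4`, then
for `t ∈ [0,T]` the solution of `u' = -θ κ(t) F_h u` remains small on the nodes
`p_i ≤ 1/2`, bounded by `(4eθtK_max)^{M/4} / (1 - 4eθtK_max) · ‖u(0)‖₂`. -/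
theorem Fh_finite_propagation_speed
    (M : ℕ) (hM : 0 < M) (hM4 : 4 ∣ M)
    (θ T Kmax : ℝ) (hθ : 0 < θ) (hT : 0 < T) (hKmax : 0 < Kmax)
    (hCFL : θ * Kmax * T < 1 / (4 * Real.exp 1))
    (κ : ℝ → ℝ) (hκc : Continuous κ)
    (hκ : ∀ t ∈ Set.Icc (0 : ℝ) T, 0 ≤ κ t ∧ κ t ≤ Kmax)
    (u : ℝ → Fin (M + 1) → ℂ)
    (hu : ∀ (t : ℝ) (j : Fin (M + 1)),
      HasDerivAt (fun s => u s j)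
        (((-(θ * κ t) : ℝ) : ℂ) *
          (((FhMat M).map (fun x : ℝ => (x : ℂ))).mulVec (u t) j)) t)
    (hu0 : ∀ j : Fin (M + 1), ((j : ℕ) : ℝ) / M ≤ 3 / 4 → u 0 j = 0) :
    ∀ t ∈ Set.Icc (0 : ℝ) T, ∀ i : Fin (M + 1), ((i : ℕ) : ℝ) / M ≤ 1 / 2 →
      ‖u t i‖ ≤ (4 * Real.exp 1 * θ * t * Kmax) ^ (M / 4)
          / (1 - 4 * Real.exp 1 * θ * t * Kmax)
          * Real.sqrt (∑ j : Fin (M + 1), ‖u 0 j‖ ^ 2) := by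
  intro t ht i hi
  have ht₀ : 0 ≤ t := ht.1
  have hx₁ : 4 * exp 1 * θ * t * Kmax < 1 := by
    have := (lt_div_iff₀ (by positivity)).1 hCFL
    calc 4 * exp 1 * θ * t * Kmax ≤ 4 * exp 1 * θ * T * Kmax := by gcongr; exact ht.2
      _ < 1 := by linarith
  have hCFL' : θ * Kmax * T ≤ 3 / 4 - 1 / 2 := by
    have : 1 / (4 * exp 1) ≤ 1 / (4 * 1) := by gcongr; exact one_le_exp zero_le_one
    linarith
  have h_rpow := Fh_finite_propagation_speed_general hM hθ hKmax (by norm_num) hCFL'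
    (fun s hs ↦ (abs_of_nonneg (hκ s hs).1).trans_le (hκ s hs).2)
    (fun s _ ↦ (hasDerivAt_pi.2 (hu s)).hasDerivWithinAt) (fun j hj ↦ hu0 j hj.le) ht hi
  calc ‖u t i‖ ≤ (4 * exp 1 * θ * t * Kmax) ^ ((M : ℝ) / (4 : ℕ)) * ‖u 0‖ := by
        convert h_rpow using 3 <;> ring
    _ ≤ _ := by
        have h_pow := rpow_natCast_div_le_pow_div_one_sub (x := 4 * exp 1 * θ * t * Kmax)
          (by positivity) hx₁ M 4
        exact mul_le_mul h_pow (pi_norm_le_sqrt_sum_norm_sq (u 0)) (norm_nonneg _)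
          ((rpow_nonneg (by positivity) _).trans h_pow)
end

section
/- Let $M \ge 3$, $h = 1/M$, $p_j = j h$, and let $v : \mathbb{R} \to \mathbb{R}$ be three times continuously differentiable on $[0,1]$ with $\sup_{[0,1]} |v''| \le M_2$ and $\sup_{[0,1]} |v'''| \le M_3$. Then for every interior index $2 \le i \le M - 1$, the finite-difference stencil satisfies the local consistency bound $\Big| \tfrac{p_{i+1} + p_i}{4h}\, v(p_{i+1}) - \tfrac{p_i + p_{i-1}}{4h}\, v(p_{i-1}) - \big( p_i\, v'(p_i) + \tfrac{1}{2} v(p_i) \big) \Big| \le h^2 \Big( \tfrac{M_2}{4} + \tfrac{M_3}{6} \Big)$. -/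
open Set

/-!
The stencil is linear in `v`. Applied to the second-order Taylor polynomial of `v` at `p` it gives
`p v'(p) + v(p) / 2` plus exactly `h² v''(p) / 4`, so what remains is the stencil applied to the
Taylor remainder. That remainder is at most `M₃ h³ / 6` at both neighbours, and the two weights,
although of order `1 / h`, have absolute values summing to `max |p| (h / 2) / h`.
-/

open scoped Nat

section Taylor

theorem iteratedDerivWithin_subset {𝕜 E : Type*} [NontriviallyNormedField 𝕜]
    [NormedAddCommGroup E] [NormedSpace 𝕜 E] {f : 𝕜 → E} {s t : Set 𝕜} {n : ℕ} {x : 𝕜}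
    (hst : s ⊆ t) (hs : UniqueDiffOn 𝕜 s) (ht : UniqueDiffOn 𝕜 t) (hf : ContDiffOn 𝕜 n f t)
    (hx : x ∈ s) : iteratedDerivWithin n f s x = iteratedDerivWithin n f t x := by
  simp only [iteratedDerivWithin, iteratedFDerivWithin_subset hst hs ht hf hx]

theorem taylorWithinEval_subset {E : Type*} [NormedAddCommGroup E] [NormedSpace ℝ E] {f : ℝ → E}
    {s t : Set ℝ} {n : ℕ} {x₀ : ℝ} (hst : s ⊆ t) (hs : UniqueDiffOn ℝ s) (ht : UniqueDiffOn ℝ t)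
    (hf : ContDiffOn ℝ n f t) (hx₀ : x₀ ∈ s) (x : ℝ) :
    taylorWithinEval f n s x₀ x = taylorWithinEval f n t x₀ x := by
  simp only [taylor_within_apply]
  refine Finset.sum_congr rfl fun k hk ↦ ?_
  have hkn : k ≤ n := Nat.lt_succ_iff.mp (Finset.mem_range.mp hk)
  rw [iteratedDerivWithin_subset hst hs ht (hf.of_le (mod_cast hkn)) hx₀]

theorem taylorWithinEval_two {E : Type*} [NormedAddCommGroup E] [NormedSpace ℝ E] (f : ℝ → E)
    (s : Set ℝ) (x₀ x : ℝ) :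
    taylorWithinEval f 2 s x₀ x = f x₀ + (x - x₀) • derivWithin f s x₀ +
      ((x - x₀) ^ 2 / 2) • iteratedDerivWithin 2 f s x₀ := by
  simp [taylorWithinEval_succ, iteratedDerivWithin_one, one_add_one_eq_two, div_eq_inv_mul]

variable {f : ℝ → ℝ} {s : Set ℝ} {n : ℕ} {x₀ x : ℝ}

theorem exists_sub_taylorWithinEval_eq_of_convex (hs : Convex ℝ s)
    (hf : ContDiffOn ℝ (n + 1) f s) (hx₀ : x₀ ∈ s) (hx : x ∈ s) (hne : x₀ ≠ x) :
    ∃ y ∈ uIoo x₀ x, f x - taylorWithinEval f n s x₀ x =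
      iteratedDerivWithin (n + 1) f s y * (x - x₀) ^ (n + 1) / (n + 1)! := by
  have hsub : uIcc x₀ x ⊆ s := hs.ordConnected.uIcc_subset hx₀ hx
  have hs_unique : UniqueDiffOn ℝ s :=
    uniqueDiffOn_convex hs (hs.nontrivial_iff_nonempty_interior.1 ⟨x₀, hx₀, x, hx, hne⟩)
  have hu_unique : UniqueDiffOn ℝ (uIcc x₀ x) := uniqueDiffOn_uIcc hne
  have hdiff : DifferentiableOn ℝ (iteratedDerivWithin n f (uIcc x₀ x)) (uIcc x₀ x) :=
    (hf.mono hsub).differentiableOn_iteratedDerivWithin (mod_cast n.lt_succ_self) hu_unique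
  obtain ⟨y, hy, hrem⟩ := taylor_mean_remainder_lagrange hne (hf.mono hsub).of_succ
    (hdiff.mono uIoo_subset_uIcc_self)
  refine ⟨y, hy, ?_⟩
  rwa [taylorWithinEval_subset hsub hu_unique hs_unique hf.of_succ left_mem_uIcc,
    iteratedDerivWithin_subset hsub hu_unique hs_unique (mod_cast hf)
      (uIoo_subset_uIcc_self hy)] at hrem

theorem abs_sub_taylorWithinEval_le_of_convex {C : ℝ} (hs : Convex ℝ s)
    (hf : ContDiffOn ℝ (n + 1) f s) (hx₀ : x₀ ∈ s) (hx : x ∈ s)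
    (hC : ∀ y ∈ s, |iteratedDerivWithin (n + 1) f s y| ≤ C) :
    |f x - taylorWithinEval f n s x₀ x| ≤ C * |x - x₀| ^ (n + 1) / (n + 1)! := by
  obtain rfl | hne := eq_or_ne x₀ x
  · simp
  obtain ⟨y, hy, hrem⟩ := exists_sub_taylorWithinEval_eq_of_convex hs hf hx₀ hx hne
  have hys : y ∈ s := hs.ordConnected.uIcc_subset hx₀ hx (uIoo_subset_uIcc_self hy)
  rw [hrem, abs_div, abs_mul, abs_pow, Nat.abs_cast]
  gcongr
  exact hC y hys

end Taylor

/-- The interior row of `F_h` at the node `p`, applied to `v`: it approximates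
`p v'(p) + v(p) / 2`. The neighbouring nodes are written `p + h` and `p - h`, so that `p` may be
any real number. -/
noncomputable def interiorStencil (h : ℝ) (v : ℝ → ℝ) (p : ℝ) : ℝ :=
  (p + h + p) / (4 * h) * v (p + h) - (p + (p - h)) / (4 * h) * v (p - h)

theorem interiorStencil_sub (h : ℝ) (v w : ℝ → ℝ) (p : ℝ) :
    interiorStencil h (v - w) p = interiorStencil h v p - interiorStencil h w p := by
  simp only [interiorStencil, Pi.sub_apply]
  ring

theorem interiorStencil_taylorWithinEval_two {h : ℝ} (hh : h ≠ 0) (v : ℝ → ℝ) (s : Set ℝ)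
    (p : ℝ) :
    interiorStencil h (taylorWithinEval v 2 s p) p =
      p * derivWithin v s p + 1 / 2 * v p + h ^ 2 / 4 * iteratedDerivWithin 2 v s p := by
  simp only [interiorStencil, taylorWithinEval_two, smul_eq_mul]
  field_simp
  ring

theorem abs_add_add_abs_sub_eq_two_mul_max {R : Type*} [CommRing R] [LinearOrder R]
    [IsStrictOrderedRing R] (a b : R) :
    |a + b| + |a - b| = 2 * max |a| |b| := by
  grind

theorem abs_interiorStencil_le {w : ℝ → ℝ} {h p C : ℝ} (hh : 0 < h)
    (hadd : |w (p + h)| ≤ C) (hsub : |w (p - h)| ≤ C) :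
    |interiorStencil h w p| ≤ max |p| (h / 2) / h * C := by
  have hweights : |p + h / 2| + |p - h / 2| = 2 * max |p| (h / 2) := by
    rw [abs_add_add_abs_sub_eq_two_mul_max, abs_of_pos (half_pos hh)]
  calc |interiorStencil h w p|
      = |(p + h / 2) / (2 * h) * w (p + h) - (p - h / 2) / (2 * h) * w (p - h)| := by
        unfold interiorStencil
        congr 1
        field_simp
        ring
    _ ≤ |p + h / 2| / (2 * h) * |w (p + h)| + |p - h / 2| / (2 * h) * |w (p - h)| := by
        refine (abs_sub _ _).trans_eq ?_
        simp only [abs_mul, abs_div, abs_of_pos hh, abs_two]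
    _ ≤ |p + h / 2| / (2 * h) * C + |p - h / 2| / (2 * h) * C := by gcongr
    _ = (|p + h / 2| + |p - h / 2|) / (2 * h) * C := by ring
    _ = max |p| (h / 2) / h * C := by rw [hweights, mul_div_mul_left _ _ two_ne_zero]

theorem Fh_local_consistency_general {v : ℝ → ℝ} {s : Set ℝ} {h p M2 M3 : ℝ}
    (hs : Convex ℝ s) (hv : ContDiffOn ℝ 3 v s) (hh : 0 < h)
    (hsub : p - h ∈ s) (hadd : p + h ∈ s)
    (hM2 : |iteratedDerivWithin 2 v s p| ≤ M2)
    (hM3 : ∀ x ∈ s, |iteratedDerivWithin 3 v s x| ≤ M3) :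
    |interiorStencil h v p - (p * derivWithin v s p + 1 / 2 * v p)| ≤
      h ^ 2 * (M2 / 4 + max |p| (h / 2) * (M3 / 6)) := by
  have hp : p ∈ s := hs.ordConnected.out hsub hadd ⟨by linarith, by linarith⟩
  set R := v - taylorWithinEval v 2 s p
  have hR {x : ℝ} (hx : x ∈ s) (hxp : |x - p| = h) : |R x| ≤ M3 * h ^ 3 / 6 :=
    calc |R x| ≤ M3 * |x - p| ^ 3 / 3 ! :=
          abs_sub_taylorWithinEval_le_of_convex (n := 2) hs (mod_cast hv) hp hx hM3
      _ = M3 * h ^ 3 / 6 := by rw [hxp]; norm_num [Nat.factorial]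
  have hstencilR : |interiorStencil h R p| ≤ max |p| (h / 2) / h * (M3 * h ^ 3 / 6) :=
    abs_interiorStencil_le hh (hR hadd (by simp [abs_of_pos hh]))
      (hR hsub (by simp [abs_of_pos hh]))
  calc |interiorStencil h v p - (p * derivWithin v s p + 1 / 2 * v p)|
      = |h ^ 2 / 4 * iteratedDerivWithin 2 v s p + interiorStencil h R p| := by
        rw [interiorStencil_sub, interiorStencil_taylorWithinEval_two hh.ne']
        congr 1
        ring
    _ ≤ h ^ 2 / 4 * |iteratedDerivWithin 2 v s p| + |interiorStencil h R p| := by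
        refine (abs_add_le _ _).trans_eq ?_
        rw [abs_mul, abs_of_pos (by positivity : 0 < h ^ 2 / 4)]
    _ ≤ h ^ 2 / 4 * M2 + max |p| (h / 2) / h * (M3 * h ^ 3 / 6) := by gcongr
    _ = h ^ 2 * (M2 / 4 + max |p| (h / 2) * (M3 / 6)) := by
        field_simp

/-- **Local consistency of the interior finite-difference stencil.**
For `v ∈ C³[0,1]` with `|v''| ≤ M₂` and `|v'''| ≤ M₃` on `[0,1]`, the interior stencil of
`F_h` approximates `(Fv)(p_i) = p_i v'(p_i) + v(p_i)/2` with error at most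
`h²(M₂/4 + M₃/6)`. -/
theorem Fh_local_consistency
    (M : ℕ) (hM : 3 ≤ M)
    (v : ℝ → ℝ) (hv : ContDiffOn ℝ 3 v (Icc 0 1))
    (M2 M3 : ℝ)
    (hM2 : ∀ p ∈ Icc (0 : ℝ) 1, |iteratedDerivWithin 2 v (Icc 0 1) p| ≤ M2)
    (hM3 : ∀ p ∈ Icc (0 : ℝ) 1, |iteratedDerivWithin 3 v (Icc 0 1) p| ≤ M3) :
    ∀ i : ℕ, 2 ≤ i → i ≤ M - 1 →
      let h : ℝ := 1 / M
      let p : ℕ → ℝ := fun k => k * h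
      |((p (i + 1) + p i) / (4 * h)) * v (p (i + 1))
          - ((p i + p (i - 1)) / (4 * h)) * v (p (i - 1))
          - (p i * derivWithin v (Icc 0 1) (p i) + (1 / 2) * v (p i))|
        ≤ h ^ 2 * (M2 / 4 + M3 / 6) := by
  intro i hi hiM h p
  have hh : 0 < h := one_div_pos.mpr (by norm_cast; lia)
  have hmem {k : ℕ} (hk : k ≤ M) : p k ∈ Icc 0 1 := by
    simpa only [p, h, mul_one_div] using
      unitInterval.div_mem k.cast_nonneg M.cast_nonneg (Nat.cast_le.mpr hk)
  have hsucc : p (i + 1) = p i + h := by simp only [p]; push_cast; ring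
  have hpred : p (i - 1) = p i - h := by simp only [p]; rw [Nat.cast_pred (by lia)]; ring
  have hsub : p i - h ∈ Icc 0 1 := hpred ▸ hmem (by lia)
  have hadd : p i + h ∈ Icc 0 1 := hsucc ▸ hmem (by lia)
  have hi_mem : p i ∈ Icc 0 1 := hmem (by lia)
  have hM3_nonneg : 0 ≤ M3 := (abs_nonneg _).trans (hM3 _ hi_mem)
  have hmax : max |p i| (h / 2) ≤ 1 :=
    max_le (abs_le.mpr ⟨by linarith [hi_mem.1], hi_mem.2⟩) (by linarith [hi_mem.1, hadd.2])
  rw [hsucc, hpred]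
  refine (Fh_local_consistency_general (convex_Icc 0 1) hv hh hsub hadd (hM2 _ hi_mem) hM3).trans ?_
  gcongr
  exact mul_le_of_le_one_left (by positivity) hmax
end

section
/- For integers $m \ge 1$ and $1 \le s \le m$, the central-difference coefficients $c_s^{(m)} = (-1)^{s+1} \dfrac{\binom{2m}{m+s}}{s \binom{2m}{m}}$ of the $2m$-th order summation-by-parts difference operator satisfy $|c_s^{(m)}| \le \dfrac{m}{m+1}$; equivalently, $(m+1) \binom{2m}{m+s} \le s\, m \binom{2m}{m}$ for all $1 \le s \le m$. -/
/-!
Beyond the middle of a row of Pascal's triangle the binomial coefficients decrease, so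
`C(2m, m+s) ≤ C(2m, m+1) = m/(m+1) · C(2m, m)` for every `s ≥ 1`. Hence the `s`-th coefficient
is at most `m/((m+1)s)` in absolute value, with equality for `s = 1`.
-/

theorem choose_succ_le_choose_of_half_le {n k : ℕ} (h : n / 2 ≤ k) :
    n.choose (k + 1) ≤ n.choose k := by
  refine Nat.le_of_mul_le_mul_right (c := k + 1) ?_ k.succ_pos
  calc n.choose (k + 1) * (k + 1)
      = n.choose k * (n - k) := n.choose_succ_right_eq k
    _ ≤ n.choose k * (k + 1) := Nat.mul_le_mul_left _ (by lia)

theorem antitoneOn_choose_Ici_half (n : ℕ) : AntitoneOn n.choose (Set.Ici (n / 2)) :=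
  antitoneOn_nat_Ici_of_succ_le fun _ hk ↦ choose_succ_le_choose_of_half_le hk

theorem succ_mul_choose_le_sub_mul_choose {n k j : ℕ} (hn : n / 2 ≤ k + 1) (hkj : k < j) :
    (k + 1) * n.choose j ≤ (n - k) * n.choose k :=
  calc (k + 1) * n.choose j
      ≤ (k + 1) * n.choose (k + 1) :=
        Nat.mul_le_mul_left _ (antitoneOn_choose_Ici_half n hn (hn.trans hkj) hkj)
    _ = (n - k) * n.choose k := by
        rw [mul_comm, n.choose_succ_right_eq, mul_comm]

theorem central_difference_coefficient_bound_general (m s : ℕ) (hs : 1 ≤ s) :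
    |((-1 : ℝ) ^ (s + 1) * (Nat.choose (2 * m) (m + s) : ℝ)
        / ((s : ℝ) * (Nat.choose (2 * m) m : ℝ)))| ≤ (m : ℝ) / ((m + 1) * s) ∧
    (m + 1) * Nat.choose (2 * m) (m + s) ≤ m * Nat.choose (2 * m) m := by
  have choose_bound : (m + 1) * (2 * m).choose (m + s) ≤ m * (2 * m).choose m := by
    simpa only [two_mul, Nat.add_sub_cancel] using
      succ_mul_choose_le_sub_mul_choose (n := 2 * m) (k := m) (j := m + s) (by lia) (by lia)
  have choose_pos : (0 : ℝ) < (2 * m).choose m := mod_cast Nat.choose_pos (by lia)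
  have ratio_bound : ((2 * m).choose (m + s) : ℝ) / (2 * m).choose m ≤ m / (m + 1) := by
    rw [div_le_div_iff₀ choose_pos (by positivity), mul_comm]
    exact_mod_cast choose_bound
  refine ⟨?_, choose_bound⟩
  calc |(-1 : ℝ) ^ (s + 1) * (2 * m).choose (m + s) / (s * (2 * m).choose m)|
      = (2 * m).choose (m + s) / (2 * m).choose m / s := by
        rw [abs_div, abs_mul, abs_neg_one_pow, one_mul, Nat.abs_cast, abs_mul, Nat.abs_cast,
          Nat.abs_cast, div_div, mul_comm (s : ℝ)]
    _ ≤ m / (m + 1) / s := by gcongr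
    _ = m / ((m + 1) * s) := div_div _ _ _

/-- **Bound on the central-difference SBP coefficients.**
For `1 ≤ s ≤ m`, the coefficients `c_s^{(m)} = (-1)^{s+1} C(2m, m+s) / (s C(2m, m))`
satisfy `|c_s^{(m)}| ≤ m/(m+1)`; equivalently
`(m+1) C(2m, m+s) ≤ s m C(2m, m)`. -/
theorem central_difference_coefficient_bound
    (m s : ℕ) (hm : 1 ≤ m) (hs1 : 1 ≤ s) (hsm : s ≤ m) :
    |((-1 : ℝ) ^ (s + 1) * (Nat.choose (2 * m) (m + s) : ℝ)
        / ((s : ℝ) * (Nat.choose (2 * m) m : ℝ)))| ≤ (m : ℝ) / (m + 1) ∧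
    (m + 1) * Nat.choose (2 * m) (m + s) ≤ s * m * Nat.choose (2 * m) m := by
  obtain ⟨coeff_bound, choose_bound⟩ := central_difference_coefficient_bound_general m s hs1
  refine ⟨coeff_bound.trans ?_, choose_bound.trans ?_⟩
  · gcongr
    exact le_mul_of_one_le_right (by positivity) (mod_cast hs1)
  · gcongr
    exact Nat.le_mul_of_pos_left m hs1
end

section
/- Let $n \ge 1$ and let $W$ and $P$ be real diagonal $n \times n$ matrices, $D$ an arbitrary real $n \times n$ matrix, and suppose the summation-by-parts identity $W D + D^{\top} W = B$ holds with $B$ diagonal. Define the split operator $G = \tfrac{1}{2} (P D + D P)$. Then $W G + G^{\top} W = \tfrac{1}{2} (P B + B P)$. In particular, if $P = \mathrm{diag}(p_0, \dots, p_{M})$ with $p_0 = 0$ and $p_M = 1$, and $B = \mathrm{diag}(-1, 0, \dots, 0, 1)$, then $W G + G^{\top} W = \mathrm{diag}(0, 0, \dots, 0, 1)$, so $G$ is skew-Hermitian in the $W$-weighted inner product on vectors vanishing in the last component. -/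
open Matrix

/-!
The map `X ↦ W X + Xᴴ W` commutes with the anticommutator `X ↦ P X + X P` whenever `P` is
Hermitian and commutes with `W`, so it sends the split operator to `(PB + BP)/2`. If
`B = r rᴴ - l lᴴ`, where the boundary vectors satisfy `P l = 0` and `P r = r`, only the `r` term
survives the anticommutator.
-/

section StarRing

variable {A : Type*} [NonUnitalSemiring A] [StarRing A]

theorem mul_anticommutator_add_star_anticommutator_mul {w p : A} (hp : IsSelfAdjoint p)
    (hwp : Commute w p) (d : A) :
    w * (p * d + d * p) + star (p * d + d * p) * w =
      p * (w * d + star d * w) + (w * d + star d * w) * p := by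
  have hleft : w * (p * d) = p * (w * d) := hwp.left_comm d
  simp only [star_add, star_mul, hp.star_eq, mul_add, add_mul, mul_assoc, hleft, hwp.eq]
  abel

end StarRing

section BoundaryVectors

variable {n : Type*} [Fintype n]

theorem anticommutator_vecMulVec_sub_vecMulVec {R : Type*} [NonUnitalRing R] [StarRing R]
    {P : Matrix n n R} (hP : P.IsHermitian) {l r : n → R} (hl : P *ᵥ l = 0) (hr : P *ᵥ r = r) :
    P * (vecMulVec r (star r) - vecMulVec l (star l)) +
        (vecMulVec r (star r) - vecMulVec l (star l)) * P =
      vecMulVec r (star r) + vecMulVec r (star r) := by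
  have star_vecMul (v : n → R) : star v ᵥ* P = star (P *ᵥ v) := by rw [star_mulVec, hP.eq]
  simp only [mul_sub, sub_mul, mul_vecMulVec, vecMulVec_mul, star_vecMul, hl, hr, star_zero,
    zero_vecMulVec, vecMulVec_zero, sub_zero]

theorem sbp_split_operator_skew_hermitian_general {K : Type*} [Field K] [StarRing K]
    [NeZero (2 : K)] {W P B D G : Matrix n n K} (hP : P.IsHermitian) (hWP : Commute W P)
    (hSBP : W * D + Dᴴ * W = B) (hG : G = (1 / 2 : K) • (P * D + D * P)) :
    W * G + Gᴴ * W = (1 / 2 : K) • (P * B + B * P) ∧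
      ∀ l r : n → K, P *ᵥ l = 0 → P *ᵥ r = r →
        B = vecMulVec r (star r) - vecMulVec l (star l) →
        W * G + Gᴴ * W = vecMulVec r (star r) := by
  have star_half : star (1 / 2 : K) = 1 / 2 := by simp
  have key : W * G + Gᴴ * W = (1 / 2 : K) • (P * B + B * P) := by
    rw [hG, conjTranspose_smul, star_half, mul_smul_comm, smul_mul_assoc, ← smul_add, ← hSBP]
    exact congrArg _ (mul_anticommutator_add_star_anticommutator_mul hP hWP D)
  refine ⟨key, fun l r hl hr hB => ?_⟩
  rw [key, hB, anticommutator_vecMulVec_sub_vecMulVec hP hl hr, smul_add, ← add_smul, add_halves,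
    one_smul]

end BoundaryVectors

section StandardBasis

variable {n R : Type*} [DecidableEq n]

theorem vecMulVec_single_one_star [Semiring R] [StarRing R] (i : n) :
    vecMulVec (Pi.single i (1 : R)) (star (Pi.single i 1)) =
      diagonal fun j => if j = i then 1 else 0 := by
  rw [← Pi.single_star, star_one, ← single_eq_single_vecMulVec_single, ← diagonal_single]
  exact congrArg diagonal (funext fun j => Pi.single_apply i 1 j)

theorem vecMulVec_single_one_star_sub [Ring R] [StarRing R] {i j : n} (hij : i ≠ j) :
    vecMulVec (Pi.single j (1 : R)) (star (Pi.single j 1)) -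
        vecMulVec (Pi.single i 1) (star (Pi.single i 1)) =
      diagonal fun k => if k = i then -1 else if k = j then 1 else 0 := by
  simp only [vecMulVec_single_one_star, diagonal_sub]
  congr 1
  ext k
  split_ifs <;> simp_all

end StandardBasis

/-- **Skew-Hermiticity of the split SBP discretization of `p ∂_p + 1/2`.**
If `W D + Dᵀ W = B` with `W`, `P`, `B` diagonal, then `G = (PD + DP)/2` satisfies
`W G + Gᵀ W = (PB + BP)/2`; in particular, for `P = diag(p₀,…,p_M)` with `p₀ = 0`,
`p_M = 1` and `B = diag(-1, 0, …, 0, 1)`, one gets `W G + Gᵀ W = diag(0, …, 0, 1)`. -/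
theorem sbp_split_operator_skew_hermitian
    (M : ℕ) (hM : 1 ≤ M)
    (w p b : Fin (M + 1) → ℝ)
    (D : Matrix (Fin (M + 1)) (Fin (M + 1)) ℝ)
    (hSBP : diagonal w * D + Dᵀ * diagonal w = diagonal b)
    (G : Matrix (Fin (M + 1)) (Fin (M + 1)) ℝ)
    (hG : G = (1 / 2 : ℝ) • (diagonal p * D + D * diagonal p)) :
    (diagonal w * G + Gᵀ * diagonal w
        = (1 / 2 : ℝ) • (diagonal p * diagonal b + diagonal b * diagonal p)) ∧
    (p 0 = 0 → p (Fin.last M) = 1 →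
      b = (fun j : Fin (M + 1) =>
        if j = 0 then (-1 : ℝ) else if j = Fin.last M then 1 else 0) →
      diagonal w * G + Gᵀ * diagonal w
        = diagonal (fun j : Fin (M + 1) => if j = Fin.last M then (1 : ℝ) else 0)) := by
  -- Over `ℝ` the matrices `Dᴴ` and `Dᵀ` are definitionally equal.
  refine (sbp_split_operator_skew_hermitian_general (isHermitian_diagonal p)
    (commute_diagonal w p) hSBP hG).imp_right fun hboundary h0 h1 hb => ?_
  have hne : 0 ≠ Fin.last M := ne_of_apply_ne p (by simp [h0, h1])
  rw [← vecMulVec_single_one_star]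
  exact hboundary (Pi.single 0 1) (Pi.single (Fin.last M) 1) (by simp [h0]) (by simp [h1])
    (by rw [hb, vecMulVec_single_one_star_sub hne])
end
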